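/- Let γ ≥ 1, μ, k > 0, and define the sound speed c_s(ρ) = √(γρ^{γ−1}) and the characteristic speeds λ₁(ρ, m) = m/ρ − c_s(ρ), λ₂(ρ, m) = m/ρ + c_s(ρ). For any P⁻ > 0 there exists ε > 0 such that: if P⁺ > 0 with |P⁺ − P⁻| < ε, the constants P^±, J^±, s satisfy the Rankine–Hugoniot conditions J⁺ − J⁻ = s(P⁺ − P⁻) and ((J⁺)²/P⁺ + (P⁺)^γ) − ((J⁻)²/P⁻ + (P⁻)^γ) = s(J⁺ − J⁻), and either (i) the Lax 2-shock condition λ₂(P⁺, J⁺) < s < λ₂(P⁻, J⁻) holds together with J⁺/P⁺ > c_s(P⁺), or (ii) the Lax 1-shock condition λ₁(P⁺, J⁺) < s < λ₁(P⁻, J⁻) holds together with |J⁻/P⁻| < c_s(P⁻), then there exists a traveling wave profile: a C¹ solution (P, Q) : ℝ → (0,∞) × ℝ of the system P' = Q, Q' = (2/k²)f(P) − (2μs/k²)Q + Q²/P, with (P, Q)(y) → (P⁻, 0) as y → −∞ and (P, Q)(y) → (P⁺, 0) as y → +∞, and associated momentum profile J(y) = sP(y) − (sP⁻ − J⁻).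 -/

import Mathlib

open Filter Topology

/-- The nonlinearity of the traveling-wave (profile) equation of the viscous QHD system,
with end states `Pm = P⁻`, `Pp = P⁺` and pressure exponent `γ`. -/
noncomputable def profileF (γ Pm Pp P : ℝ) : ℝ :=
  P ^ γ + Pm * Pp / P * ((Pp ^ γ - Pm ^ γ) / (Pp - Pm))
    - (Pp ^ (γ + 1) - Pm ^ (γ + 1)) / (Pp - Pm)

/-- The sound speed `c_s(ρ) = √(γ ρ^{γ−1})`. -/
noncomputable def soundSpeed (γ ρ : ℝ) : ℝ := Real.sqrt (γ * ρ ^ (γ - 1))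




theorem flow_exists {E : Type*} [NormedAddCommGroup E] [NormedSpace ℝ E] [CompleteSpace E]
    (f : E → E) (K : NNReal) (hf : LipschitzWith K f) (L : ℝ) (hL : ∀ x, ‖f x‖ ≤ L) (x : E) :
    ∃ α : ℝ → E, α 0 = x ∧ ∀ t, HasDerivAt α (f (α t)) t := by
  have hL0 : 0 ≤ L := (norm_nonneg _).trans (hL x)
  have key : ∀ n : ℕ, ∃ α : ℝ → E, α 0 = x ∧
      ∀ t ∈ Set.Icc (-(n+1:ℝ)) (n+1:ℝ), HasDerivWithinAt α (f (α t)) (Set.Icc (-(n+1:ℝ)) (n+1:ℝ)) t := by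
    intro n
    have hn : (0:ℝ) ≤ n + 1 := by positivity
    have h : IsPicardLindelof (fun _ => f) (tmin := -(n+1:ℝ)) (tmax := (n+1:ℝ))
        ⟨0, by constructor <;> linarith⟩ x (⟨L * (n+1), by positivity⟩ : NNReal) 0
        (⟨L, hL0⟩ : NNReal) K := by
      apply IsPicardLindelof.of_time_independent
      · intro y _; exact hL y
      · exact hf.lipschitzOnWith
      · simp
        exact le_rfl
    exact h.exists_eq_forall_mem_Icc_hasDerivWithinAt₀
  choose α h0 hα using key
  have hα' : ∀ n : ℕ, ∀ t ∈ Set.Ioo (-(n+1:ℝ)) (n+1:ℝ), HasDerivAt (α n) (f (α n t)) t :=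
    fun n t ht => (hα n t (Set.Ioo_subset_Icc_self ht)).hasDerivAt (Icc_mem_nhds ht.1 ht.2)
  have heq : ∀ m n : ℕ, m ≤ n → Set.EqOn (α m) (α n) (Set.Ioo (-(m+1:ℝ)) (m+1:ℝ)) := by
    intro m n hmn
    have hmn' : (m:ℝ) ≤ n := by exact_mod_cast hmn
    refine ODE_solution_unique_of_mem_Ioo (v := fun _ => f) (s := fun _ => Set.univ) (K := K)
      (t₀ := 0) (fun t _ => hf.lipschitzOnWith) ?_ ?_ ?_ ?_
    · constructor <;> [skip; skip] <;> have : (0:ℝ) ≤ m := by positivity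
      all_goals linarith
    · intro t ht; exact ⟨hα' m t ht, trivial⟩
    · intro t ht; exact ⟨hα' n t ⟨by linarith [ht.1], by linarith [ht.2]⟩, trivial⟩
    · rw [h0, h0]
  refine ⟨fun t => α ⌈|t|⌉₊ t, by simp [h0], fun t => ?_⟩
  have hloc : ∀ s : ℝ, |s| < ⌈|t|⌉₊ + 1 → α ⌈|s|⌉₊ s = α ⌈|t|⌉₊ s := by
    intro s hs
    have h1 : s ∈ Set.Ioo (-(⌈|s|⌉₊+1:ℝ)) (⌈|s|⌉₊+1:ℝ) := by
      have := Nat.le_ceil |s|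
      exact abs_lt.mp (by linarith)
    rcases le_total ⌈|s|⌉₊ ⌈|t|⌉₊ with h | h
    · exact heq _ _ h h1
    · exact (heq _ _ h (abs_lt.mp hs)).symm
  have ht : |t| < ⌈|t|⌉₊ + 1 := by linarith [Nat.le_ceil |t|]
  refine (hα' ⌈|t|⌉₊ t (abs_lt.mp ht)).congr_of_eventuallyEq ?_
  have : ∀ᶠ s : ℝ in 𝓝 t, |s| < (⌈|t|⌉₊:ℝ) + 1  := continuous_abs.continuousAt.eventually_lt_const ht
  filter_upwards [this] with s hs using hloc s hs

theorem flow_unique {E : Type*} [NormedAddCommGroup E] [NormedSpace ℝ E]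
    (f : E → E) (K : NNReal) (hf : LipschitzWith K f) (α β : ℝ → E)
    (hα : ∀ t, HasDerivAt α (f (α t)) t) (hβ : ∀ t, HasDerivAt β (f (β t)) t) (t₀ : ℝ)
    (h : α t₀ = β t₀) : α = β :=
  ODE_solution_unique_univ (v := fun _ => f) (s := fun _ => Set.univ) (K := K) (t₀ := t₀)
    (fun _ => hf.lipschitzOnWith) (fun t => ⟨hα t, trivial⟩) (fun t => ⟨hβ t, trivial⟩) h

theorem flow_cont_pos {E : Type*} [NormedAddCommGroup E] [NormedSpace ℝ E]
    (f : E → E) (K : NNReal) (hf : LipschitzWith K f) (Φ : E → ℝ → E) (h0 : ∀ x, Φ x 0 = x)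
    (hΦ : ∀ x t, HasDerivAt (Φ x) (f (Φ x t)) t) (t : ℝ) (ht : 0 ≤ t) :
    Continuous fun x => Φ x t := by
  have : LipschitzWith (Real.toNNReal (Real.exp (K * t))) fun x => Φ x t := by
    apply LipschitzWith.of_dist_le_mul
    intro x y
    have := dist_le_of_trajectories_ODE (v := fun _ => f) (K := K) (fun _ => hf)
      (f := Φ x) (g := Φ y) (a := 0) (b := t) (δ := dist x y)
      (fun s _ => (hΦ x s).continuousAt.continuousWithinAt) (fun s _ => (hΦ x s).hasDerivWithinAt)
      (fun s _ => (hΦ y s).continuousAt.continuousWithinAt) (fun s _ => (hΦ y s).hasDerivWithinAt)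
      (by rw [h0, h0]) t ⟨ht, le_rfl⟩
    rw [Real.coe_toNNReal _ (Real.exp_pos _).le, mul_comm]
    simpa using this
  exact this.continuous

theorem flow_cont {E : Type*} [NormedAddCommGroup E] [NormedSpace ℝ E]
    (f : E → E) (K : NNReal) (hf : LipschitzWith K f) (Φ : E → ℝ → E) (h0 : ∀ x, Φ x 0 = x)
    (hΦ : ∀ x t, HasDerivAt (Φ x) (f (Φ x t)) t) (t : ℝ) :
    Continuous fun x => Φ x t := by
  rcases le_total 0 t with ht | ht
  · exact flow_cont_pos f K hf Φ h0 hΦ t ht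
  · have := flow_cont_pos (fun x => - f x) K hf.neg (fun x s => Φ x (-s)) (by simp [h0])
      (fun x s => by
        have := (hΦ x (-s)).scomp s (hasDerivAt_neg s)
        simpa [Function.comp_def] using this) (-t) (by linarith)
    simpa using this

theorem flow_shift {E : Type*} [NormedAddCommGroup E] [NormedSpace ℝ E]
    (f : E → E) (K : NNReal) (hf : LipschitzWith K f) (Φ : E → ℝ → E) (h0 : ∀ x, Φ x 0 = x)
    (hΦ : ∀ x t, HasDerivAt (Φ x) (f (Φ x t)) t) (x : E) (s t : ℝ) :
    Φ (Φ x s) t = Φ x (s + t) := by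
  have := flow_unique f K hf (Φ (Φ x s)) (fun t => Φ x (s + t)) (hΦ _)
    (fun t => (hΦ x (s+t)).comp_const_add s t) 0 (by simp [h0])
  exact congrFun this t

/-- barrier -/
theorem barrier_ge (p p' : ℝ → ℝ) (hp : ∀ t, HasDerivAt p (p' t) t) (κ t₀ : ℝ) (h0 : κ ≤ p t₀)
    (h : ∀ t, p t = κ → 0 < p' t) : ∀ t ≥ t₀, κ ≤ p t := by
  intro t ht
  have := image_le_of_deriv_right_lt_deriv_boundary (f := fun t => - p t) (f' := fun t => - p' t)
    (a := t₀) (b := t) (B := fun _ => -κ) (B' := fun _ => 0)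
    (fun s _ => (hp s).neg.continuousAt.continuousWithinAt)
    (fun s _ => (hp s).neg.hasDerivWithinAt) (by linarith) (fun s => hasDerivAt_const _ _)
    (fun s _ hs => by have := h s (by linarith); linarith) (x := t) ⟨ht, le_rfl⟩
  linarith

theorem barrier_le (p p' : ℝ → ℝ) (hp : ∀ t, HasDerivAt p (p' t) t) (κ t₀ : ℝ) (h0 : p t₀ ≤ κ)
    (h : ∀ t, p t = κ → p' t < 0) : ∀ t ≥ t₀, p t ≤ κ := by
  intro t ht
  have := barrier_ge (fun t => - p t) (fun t => - p' t) (fun t => (hp t).neg) (-κ) t₀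
    (by linarith) (fun t ht => by have := h t (by linarith); linarith) t ht
  linarith

/-- Barbalat-type lemma -/
theorem barbalat (V V' φ φ' : ℝ → ℝ) (C B : ℝ) (hC : 0 < C)
    (hV : ∀ t ≥ 0, HasDerivAt V (V' t) t) (hφ : ∀ t ≥ 0, HasDerivAt φ (φ' t) t)
    (hφ0 : ∀ t ≥ 0, 0 ≤ φ t) (hφC : ∀ t ≥ 0, φ' t ≤ C) (hVφ : ∀ t ≥ 0, V' t ≤ - φ t)
    (hB : ∀ t ≥ 0, B ≤ V t) : Tendsto φ atTop (𝓝 0) := by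
  have anti : ∀ W W' : ℝ → ℝ, (∀ t ≥ 0, HasDerivAt W (W' t) t) → (∀ t ≥ 0, W' t ≤ 0) →
      AntitoneOn W (Set.Ici 0) := by
    intro W W' h1 h2
    apply antitoneOn_of_deriv_nonpos (convex_Ici 0)
    · exact fun t ht => (h1 t ht).continuousAt.continuousWithinAt
    · intro t ht
      rw [interior_Ici] at ht
      exact (h1 t (le_of_lt ht)).differentiableAt.differentiableWithinAt
    · intro t ht
      rw [interior_Ici] at ht
      rw [(h1 t (le_of_lt ht)).deriv]
      exact h2 t (le_of_lt ht)
  have conv : ∀ W : ℝ → ℝ, AntitoneOn W (Set.Ici 0) → (∀ t ≥ 0, B ≤ W t) →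
      ∃ l, Tendsto W atTop (𝓝 l) := by
    intro W h1 h2
    have ha : Antitone fun t => W (max t 0) := fun s t hst =>
      h1 (Set.mem_Ici.mpr (le_max_right _ _)) (Set.mem_Ici.mpr (le_max_right _ _)) (max_le_max hst le_rfl)
    have hb : BddBelow (Set.range fun t => W (max t 0)) :=
      ⟨B, by rintro _ ⟨t, rfl⟩; exact h2 _ (le_max_right _ _)⟩
    refine ⟨_, (tendsto_atTop_ciInf ha hb).congr' ?_⟩
    filter_upwards [eventually_ge_atTop 0] with t ht
    rw [max_eq_left ht]
  obtain ⟨l1, h1⟩ := conv V (anti V V' hV fun t ht => by linarith [hVφ t ht, hφ0 t ht]) hB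
  obtain ⟨l2, h2⟩ := conv (fun t => V t + φ t ^ 2 / (2 * C))
    (anti _ (fun t => V' t + (2 * φ t * φ' t) / (2 * C))
      (fun t ht => by
        have := (hV t ht).fun_add (((hφ t ht).fun_pow 2).div_const (2 * C))
        simpa using this)
      (fun t ht => by
        have e : (2 * φ t * φ' t) / (2 * C) ≤ φ t := by
          rw [div_le_iff₀ (by positivity)]
          nlinarith [hφ0 t ht, hφC t ht, mul_nonneg (hφ0 t ht) (sub_nonneg.mpr (hφC t ht))]
        linarith [hVφ t ht]))
    (fun t ht => by have := hB t ht; have : 0 ≤ φ t ^ 2 / (2 * C) := by positivity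
                    linarith)
  have h3 : Tendsto (fun t => φ t ^ 2) atTop (𝓝 ((l2 - l1) * (2 * C))) := by
    have := (h2.sub h1).mul_const (2 * C)
    refine this.congr fun t => ?_
    field_simp; ring
  have h4 : Tendsto φ atTop (𝓝 (Real.sqrt ((l2 - l1) * (2 * C)))) := by
    refine h3.sqrt.congr' ?_
    filter_upwards [eventually_ge_atTop 0] with t ht
    rw [Real.sqrt_sq (hφ0 t ht)]
  set l := Real.sqrt ((l2 - l1) * (2 * C)) with hl
  have hl0 : 0 ≤ l := Real.sqrt_nonneg _
  rcases hl0.eq_or_lt with h | h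
  · rw [h]; exact h4
  exfalso
  have h5 : ∀ᶠ t in atTop, l / 2 < φ t := h4.eventually_const_lt (by linarith)
  obtain ⟨T, hT⟩ := (h5.and (eventually_ge_atTop 0)).exists_forall_of_atTop
  have hT0 := (hT T le_rfl).2
  have h6 : AntitoneOn (fun t => V t + l / 2 * t) (Set.Ici T) := by
    have hd : ∀ t ≥ T, HasDerivAt (fun t => V t + l / 2 * t) (V' t + l / 2 * 1) t := fun t ht =>
      (hV t (le_trans hT0 ht)).add ((hasDerivAt_id t).const_mul (l/2))
    apply antitoneOn_of_deriv_nonpos (convex_Ici T)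
    · exact fun t ht => (hd t ht).continuousAt.continuousWithinAt
    · intro t ht
      rw [interior_Ici] at ht
      exact (hd t (le_of_lt ht)).differentiableAt.differentiableWithinAt
    · intro t ht
      rw [interior_Ici] at ht
      rw [(hd t (le_of_lt ht)).deriv]
      have := (hT t (le_of_lt ht)).1
      linarith [hVφ t (le_trans hT0 (le_of_lt ht))]
  have hVT := hB T hT0
  have h7 := h6 (Set.mem_Ici.mpr le_rfl)
    (show T + 2 * (V T - B + 1) / l ∈ Set.Ici T from by
      have : 0 ≤ 2 * (V T - B + 1) / l := by apply div_nonneg <;> linarith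
      simp only [Set.mem_Ici]; linarith) (by
      have : 0 ≤ 2 * (V T - B + 1) / l := by apply div_nonneg <;> linarith
      linarith)
  have h8 := hB (T + 2 * (V T - B + 1) / l) (by
      have : 0 ≤ 2 * (V T - B + 1) / l := by apply div_nonneg <;> linarith
      show (0:ℝ) ≤ _
      have := hT0
      linarith)
  have h9 : l / 2 * (T + 2 * (V T - B + 1) / l) = l / 2 * T + (V T - B + 1) := by
    field_simp
  simp only at h7
  rw [h9] at h7
  linarith

/-- clamp -/
theorem clamp_lip (φ : ℝ → ℝ) (hφ : ContDiff ℝ 1 φ) (l r : ℝ) (hlr : l ≤ r) :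
    ∃ K : NNReal, LipschitzWith K fun x => φ (max l (min x r)) := by
  have hc : Continuous (deriv φ) := hφ.continuous_deriv le_rfl
  obtain ⟨C, hC⟩ := (isCompact_Icc (a := l) (b := r)).exists_bound_of_continuousOn hc.continuousOn
  have h1 : LipschitzOnWith C.toNNReal φ (Set.Icc l r) := by
    apply Convex.lipschitzOnWith_of_nnnorm_deriv_le
    · intro x _; exact (hφ.differentiable one_ne_zero) x
    · intro x hx
      rw [← NNReal.coe_le_coe]
      exact (hC x hx).trans (Real.le_coe_toNNReal C)
    · exact convex_Icc l r
  have h2 : LipschitzWith 1 fun x : ℝ => max l (min x r) :=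
    (LipschitzWith.id.min_const r).const_max l
  have h3 := h1.comp (g := φ) (f := fun x : ℝ => max l (min x r)) (s := Set.univ)
    h2.lipschitzOnWith (fun x _ => ⟨le_max_left _ _, max_le hlr (min_le_right _ _)⟩)
  exact ⟨_, lipschitzOnWith_univ.mp h3⟩


theorem unstable_branch (g : ℝ → ℝ) (hg : ContDiff ℝ 1 g) (b c d δ : ℝ) (hc : 0 < c) (hd : 0 < d)
    (hδ : 0 < δ) (hg0 : g b = 0) (hgd : HasDerivAt g d b) :
    ∃ v w : ℝ → ℝ, (∀ t ≤ 0, HasDerivAt v (w t) t) ∧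
      (∀ t ≤ 0, HasDerivAt w (g (v t) - c * w t) t) ∧
      (∀ t ≤ 0, b - δ < v t ∧ v t < b ∧ w t < 0) ∧
      Tendsto v atBot (𝓝 b) ∧ Tendsto w atBot (𝓝 0) := by
  -- local slope bounds
  obtain ⟨r, hr, hslope⟩ : ∃ r > 0, ∀ u, 0 < u → u < r →
      d / 2 < -g (b - u) * u⁻¹ ∧ -g (b - u) * u⁻¹ < 2 * d := by
    have h1 := hasDerivAt_iff_tendsto_slope.mp hgd
    have h2 : ∀ᶠ x in 𝓝[≠] b, slope g b x ∈ Set.Ioo (d/2) (2*d) :=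
      h1.eventually (Ioo_mem_nhds (by linarith) (by linarith))
    rw [eventually_nhdsWithin_iff, Metric.eventually_nhds_iff] at h2
    obtain ⟨r, hr, h⟩ := h2
    refine ⟨r, hr, fun u hu hur => ?_⟩
    have := h (y := b - u) (by rw [Real.dist_eq]; simp [abs_of_pos hu, hur])
      (by simp; exact hu.ne')
    have e : slope g b (b - u) = -g (b - u) * u⁻¹ := by
      rw [slope_def_field, hg0, sub_zero, show b - u - b = -u by ring, div_neg, div_eq_mul_inv, neg_mul]
    rw [e] at this
    exact this
  set τ₀ := Real.log (min r δ / 2) with hτ₀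
  have hmin : 0 < min r δ := lt_min hr hδ
  have hexp : Real.exp τ₀ = min r δ / 2 := Real.exp_log (by linarith)
  have hexpr : ∀ τ ≤ τ₀, Real.exp τ < r ∧ Real.exp τ < δ := by
    intro τ hτ
    have := Real.exp_le_exp.mpr hτ
    rw [hexp] at this
    exact ⟨by linarith [min_le_left r δ], by linarith [min_le_right r δ]⟩
  set R : ℝ → ℝ := fun τ => -g (b - Real.exp τ) * (Real.exp τ)⁻¹ with hR
  have hRb : ∀ τ ≤ τ₀, d / 2 < R τ ∧ R τ < 2 * d := fun τ hτ =>
    hslope _ (Real.exp_pos τ) (hexpr τ hτ).1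
  have hgdiff : ∀ x, HasDerivAt g (deriv g x) x := fun x =>
    ((hg.differentiable one_ne_zero) x).hasDerivAt
  have hRd : ∀ τ, HasDerivAt R (deriv g (b - Real.exp τ) - R τ) τ := by
    intro τ
    have h1 : HasDerivAt (fun τ => b - Real.exp τ) (-Real.exp τ) τ :=
      (Real.hasDerivAt_exp τ).const_sub b
    have h2 := ((hgdiff (b - Real.exp τ)).comp τ h1).fun_neg
    have h3 := h2.fun_mul ((Real.hasDerivAt_exp τ).fun_inv (Real.exp_pos τ).ne')
    refine h3.congr_deriv ?_
    have := (Real.exp_pos τ).ne'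
    simp only [hR, Function.comp]
    field_simp
    ring
  obtain ⟨D, hD⟩ := (isCompact_Icc (a := b - Real.exp τ₀) (b := b)).exists_bound_of_continuousOn
    (hg.continuous_deriv le_rfl).continuousOn
  have hRlip : LipschitzOnWith (D + 2 * d).toNNReal R (Set.Iic τ₀) := by
    apply Convex.lipschitzOnWith_of_nnnorm_hasDerivWithin_le (convex_Iic τ₀)
      (fun x _ => (hRd x).hasDerivWithinAt)
    intro x hx
    rw [← NNReal.coe_le_coe]
    refine le_trans ?_ (Real.le_coe_toNNReal _)
    rw [coe_nnnorm]
    have h1 := hD (b - Real.exp x) ⟨by linarith [Real.exp_le_exp.mpr hx], by linarith [Real.exp_pos x]⟩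
    have h2 := hRb x hx
    have h3 : ‖R x‖ ≤ 2 * d := by rw [Real.norm_eq_abs, abs_le]; constructor <;> linarith
    exact (norm_sub_le _ _).trans (by linarith)
  have hRmin : LipschitzWith (D + 2 * d).toNNReal (fun τ => R (min τ τ₀)) := by
    have h2 : LipschitzWith 1 fun x : ℝ => min x τ₀ := LipschitzWith.id.min_const τ₀
    have h3 := hRlip.comp (f := fun x : ℝ => min x τ₀) (s := Set.univ)
      h2.lipschitzOnWith (fun x _ => Set.mem_Iic.mpr (min_le_right _ _))
    rw [mul_one] at h3
    exact lipschitzOnWith_univ.mp h3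
  -- the cone
  obtain ⟨κ₁, hκ₁, hκ₁'⟩ : ∃ κ > 0, c * κ + κ ^ 2 < d / 2 := by
    refine ⟨min 1 (d / (4 * (c + 1))), by positivity, ?_⟩
    have h1 := min_le_left 1 (d / (4 * (c + 1)))
    have h2 := min_le_right 1 (d / (4 * (c + 1)))
    have h0 : 0 < min 1 (d / (4 * (c + 1))) := by positivity
    rw [le_div_iff₀ (by positivity)] at h2
    nlinarith
  obtain ⟨κ₂, hκ₂, hκ₂'⟩ : ∃ κ > κ₁, 2 * d < c * κ + κ ^ 2 := by
    refine ⟨κ₁ + 2 * d / c, by have : 0 < 2 * d / c := by positivity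
                               linarith, ?_⟩
    have : c * (κ₁ + 2 * d / c) = c * κ₁ + 2 * d := by field_simp
    have : 0 < c * κ₁ := by positivity
    have := sq_nonneg (κ₁ + 2 * d / c)
    linarith
  set cl : ℝ → ℝ := fun x => max κ₁ (min x κ₂) with hcl
  have hcl1 : ∀ x, κ₁ ≤ cl x := fun x => le_max_left _ _
  have hcl2 : ∀ x, cl x ≤ κ₂ := fun x => max_le hκ₂.le (min_le_right _ _)
  have hclid : ∀ x, κ₁ ≤ x → x ≤ κ₂ → cl x = x := fun x h1 h2 => by
    simp only [hcl]; rw [min_eq_left h2, max_eq_right h1]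
  set F : ℝ × ℝ → ℝ × ℝ := fun z => (cl z.2, R (min z.1 τ₀) - (c * cl z.2 + cl z.2 ^ 2)) with hF
  obtain ⟨K, hK⟩ : ∃ K, LipschitzWith K F := by
    obtain ⟨K1, h1⟩ := clamp_lip (fun x => x) contDiff_id κ₁ κ₂ hκ₂.le
    obtain ⟨K2, h2⟩ := clamp_lip (fun x => c * x + x ^ 2) (by fun_prop) κ₁ κ₂ hκ₂.le
    exact ⟨_, (h1.comp LipschitzWith.prod_snd).prodMk
      ((hRmin.comp LipschitzWith.prod_fst).sub (h2.comp LipschitzWith.prod_snd))⟩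
  have hFb : ∀ z, ‖F z‖ ≤ κ₂ + (2 * d + (c * κ₂ + κ₂ ^ 2)) := by
    intro z
    have h1 := hcl1 z.2
    have h2 := hcl2 z.2
    have h3 := hRb (min z.1 τ₀) (min_le_right _ _)
    have h4 : cl z.2 ^ 2 ≤ κ₂ ^ 2 := by gcongr
    have h5 : c * cl z.2 ≤ c * κ₂ := by gcongr
    have h6 : 0 ≤ c * cl z.2 := by have : 0 < cl z.2 := by linarith
                                   positivity
    have h7 := sq_nonneg (cl z.2)
    rw [Prod.norm_def, max_le_iff, Real.norm_eq_abs, Real.norm_eq_abs, abs_le, abs_le]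
    simp only [hF]
    refine ⟨⟨?_, ?_⟩, ?_, ?_⟩ <;> linarith
  choose Φ hΦ0 hΦ using fun x => flow_exists F K hK _ hFb x
  have hΦ1 : ∀ x t, HasDerivAt (fun t => (Φ x t).1) (cl (Φ x t).2) t := fun x t => (hΦ x t).fst
  have hΦ2 : ∀ x t, HasDerivAt (fun t => (Φ x t).2)
      (R (min (Φ x t).1 τ₀) - (c * cl (Φ x t).2 + cl (Φ x t).2 ^ 2)) t := fun x t => (hΦ x t).snd
  have hcont := flow_cont F K hK Φ hΦ0 hΦ
  have hshift := flow_shift F K hK Φ hΦ0 hΦ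
  have hinv : ∀ x s, (Φ x s).2 ∈ Set.Icc κ₁ κ₂ → ∀ t ≥ s, (Φ x t).2 ∈ Set.Icc κ₁ κ₂ := by
    intro x s hs t ht
    refine ⟨barrier_ge _ _ (hΦ2 x) κ₁ s hs.1 (fun t h => ?_) t ht,
      barrier_le _ _ (hΦ2 x) κ₂ s hs.2 (fun t h => ?_) t ht⟩
    · rw [h, hclid κ₁ le_rfl hκ₂.le]
      linarith [(hRb (min (Φ x t).1 τ₀) (min_le_right _ _)).1]
    · rw [h, hclid κ₂ hκ₂.le le_rfl]
      linarith [(hRb (min (Φ x t).1 τ₀) (min_le_right _ _)).2]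
  have hmono1 : ∀ x, Monotone fun t => (Φ x t).1 - κ₁ * t := fun x =>
    monotone_of_hasDerivAt_nonneg (f' := fun t => cl (Φ x t).2 - κ₁ * 1)
      (fun t => (hΦ1 x t).fun_sub ((hasDerivAt_id t).const_mul κ₁))
      (fun t => by have := hcl1 (Φ x t).2; simp only [Pi.zero_apply]; linarith)
  have hmono2 : ∀ x, Monotone fun t => κ₂ * t - (Φ x t).1 := fun x =>
    monotone_of_hasDerivAt_nonneg (f' := fun t => κ₂ * 1 - cl (Φ x t).2)
      (fun t => ((hasDerivAt_id t).const_mul κ₂).fun_sub (hΦ1 x t))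
      (fun t => by have := hcl2 (Φ x t).2; simp only [Pi.zero_apply]; linarith)
  -- nested compact sets
  set S : ℕ → Set ℝ := fun n => Set.Icc κ₁ κ₂ ∩ {q | (Φ (τ₀, q) (-(n:ℝ))).2 ∈ Set.Icc κ₁ κ₂} with hS
  have hSclosed : ∀ n, IsClosed (S n) := by
    intro n
    refine isClosed_Icc.inter (isClosed_Icc.preimage ?_)
    exact continuous_snd.comp ((hcont (-(n:ℝ))).comp (by fun_prop))
  have hSne : ∀ n, (S n).Nonempty := by
    intro n
    have hn : (0:ℝ) ≤ n := by positivity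
    have hcn : Continuous fun η : ℝ => (Φ (η, κ₁) n).1 :=
      continuous_fst.comp ((hcont n).comp (by fun_prop))
    have hκ₂0 : 0 < κ₂ := by linarith
    have hle : τ₀ - κ₂ * n ≤ τ₀ := by have := mul_nonneg hκ₂0.le hn; linarith
    have hivt := intermediate_value_Icc hle hcn.continuousOn
    have hmem : τ₀ ∈ Set.Icc (Φ (τ₀ - κ₂ * n, κ₁) n).1 (Φ (τ₀, κ₁) n).1 := by
      constructor
      · have := hmono2 (τ₀ - κ₂ * n, κ₁) hn
        simp only [hΦ0] at this
        linarith
      · have := hmono1 (τ₀, κ₁) hn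
        simp only [hΦ0] at this
        have := mul_nonneg hκ₁.le hn
        linarith
    obtain ⟨η, _, hη⟩ := hivt hmem
    have hη' : (Φ (η, κ₁) n).1 = τ₀ := hη
    have hz : (Φ (η, κ₁) n) = (τ₀, (Φ (η, κ₁) n).2) := by rw [← hη']
    have h0mem : (Φ (η, κ₁) 0).2 ∈ Set.Icc κ₁ κ₂ := by rw [hΦ0]; exact ⟨le_rfl, hκ₂.le⟩
    refine ⟨(Φ (η, κ₁) n).2, hinv _ 0 h0mem n hn, ?_⟩
    simp only [Set.mem_ofPred_eq]
    rw [← hz, hshift]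
    simpa using h0mem
  have hSanti : ∀ n, S (n+1) ⊆ S n := by
    intro n q hq
    refine ⟨hq.1, hinv _ _ hq.2 _ ?_⟩
    push_cast; linarith
  obtain ⟨q, hq⟩ := IsCompact.nonempty_iInter_of_sequence_nonempty_isCompact_isClosed S hSanti hSne
    (isCompact_Icc.of_isClosed_subset (hSclosed 0) Set.inter_subset_left) hSclosed
  rw [Set.mem_iInter] at hq
  have hp : ∀ t, (Φ (τ₀, q) t).2 ∈ Set.Icc κ₁ κ₂ := by
    intro t
    obtain ⟨n, hn⟩ := exists_nat_ge (-t)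
    exact hinv _ _ (hq n).2 t (by linarith)
  have hτ : ∀ t ≤ 0, (Φ (τ₀, q) t).1 ≤ τ₀ + κ₁ * t := by
    intro t ht
    have := hmono1 (τ₀, q) ht
    simp only [hΦ0] at this
    linarith
  have hτ' : ∀ t ≤ 0, (Φ (τ₀, q) t).1 ≤ τ₀ := fun t ht =>
    (hτ t ht).trans (by nlinarith)
  set T : ℝ → ℝ := fun t => (Φ (τ₀, q) t).1 with hT
  set p : ℝ → ℝ := fun t => (Φ (τ₀, q) t).2 with hpdef
  have hTd : ∀ t, HasDerivAt T (p t) t := fun t => by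
    have := hΦ1 (τ₀, q) t
    rwa [hclid _ (hp t).1 (hp t).2] at this
  have hpd : ∀ t ≤ 0, HasDerivAt p (R (T t) - (c * p t + p t ^ 2)) t := fun t ht => by
    have := hΦ2 (τ₀, q) t
    rwa [hclid _ (hp t).1 (hp t).2, min_eq_left (hτ' t ht)] at this
  have hTbot : Tendsto T atBot atBot := by
    refine tendsto_atBot_mono' _ (f₁ := fun t => τ₀ + κ₁ * t) ?_ ?_
    · filter_upwards [eventually_le_atBot 0] with t ht using hτ t ht
    · exact tendsto_atBot_add_const_left _ _ (tendsto_id.const_mul_atBot hκ₁)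
  have hE : Tendsto (fun t => Real.exp (T t)) atBot (𝓝 0) := Real.tendsto_exp_atBot.comp hTbot
  have hEd : ∀ t, HasDerivAt (fun t => Real.exp (T t)) (Real.exp (T t) * p t) t := fun t =>
    (hTd t).exp
  refine ⟨fun t => b - Real.exp (T t), fun t => -(Real.exp (T t) * p t), ?_, ?_, ?_, ?_, ?_⟩
  · intro t _
    exact (hEd t).const_sub b
  · intro t ht
    refine ((hEd t).fun_mul (hpd t ht)).fun_neg.congr_deriv ?_
    have := (Real.exp_pos (T t)).ne'
    simp only [hR]
    field_simp
    ring
  · intro t ht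
    have h1 := (hexpr _ (hτ' t ht)).2
    have h2 := Real.exp_pos (T t)
    have h3 : 0 < p t := lt_of_lt_of_le hκ₁ (hp t).1
    have h4 : 0 < Real.exp (T t) * p t := by positivity
    refine ⟨?_, ?_, ?_⟩
    · show b - δ < b - Real.exp (T t); linarith
    · show b - Real.exp (T t) < b; linarith
    · show -(Real.exp (T t) * p t) < 0; linarith
  · simpa using hE.const_sub b
  · have h1 : Tendsto (fun t => Real.exp (T t) * κ₂) atBot (𝓝 0) := by simpa using hE.mul_const κ₂
    have h2 : Tendsto (fun t => Real.exp (T t) * p t) atBot (𝓝 0) := by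
      refine squeeze_zero (fun t => ?_) (fun t => ?_) h1
      · exact mul_nonneg (Real.exp_pos _).le (hκ₁.le.trans (hp t).1)
      · exact mul_le_mul_of_nonneg_left (hp t).2 (Real.exp_pos _).le
    simpa using h2.neg


theorem stable_branch (g : ℝ → ℝ) (hg : ContDiff ℝ 1 g) (s a b c v₀ w₀ : ℝ) (hc : 0 < c)
    (hsa : s < a) (hab : a < b) (hgb : g b = 0)
    (hneg : ∀ x, a < x → x < b → g x < 0) (hpos : ∀ x, s ≤ x → x < a → 0 < g x)
    (hintg : 0 ≤ ∫ x in s..b, g x) (hv₀ : v₀ ∈ Set.Icc s b)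
    (hE : w₀ ^ 2 / 2 - ∫ x in b..v₀, g x < 0) :
    ∃ v w : ℝ → ℝ, v 0 = v₀ ∧ w 0 = w₀ ∧ (∀ t ≥ 0, HasDerivAt v (w t) t) ∧
      (∀ t ≥ 0, HasDerivAt w (g (v t) - c * w t) t) ∧
      Tendsto v atTop (𝓝 a) ∧ Tendsto w atTop (𝓝 0) := by
  have hsb : s < b := hsa.trans hab
  have hgc : Continuous g := hg.continuous
  have hgdiff : ∀ x, HasDerivAt g (deriv g x) x := fun x =>
    ((hg.differentiable one_ne_zero) x).hasDerivAt
  set gt : ℝ → ℝ := fun x => g (max s (min x b)) with hgt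
  have hgtc : Continuous gt := by fun_prop
  have hgtid : ∀ x ∈ Set.Icc s b, gt x = g x := fun x hx => by
    simp only [hgt]; rw [min_eq_left hx.2, max_eq_right hx.1]
  obtain ⟨Γ, hΓ⟩ := (isCompact_Icc (a := s) (b := b)).exists_bound_of_continuousOn hgc.continuousOn
  have hΓ0 : 0 ≤ Γ := (norm_nonneg _).trans (hΓ s ⟨le_rfl, hsb.le⟩)
  have hgtb : ∀ x, |gt x| ≤ Γ := fun x =>
    hΓ _ ⟨le_max_left _ _, max_le hsb.le (min_le_right _ _)⟩
  obtain ⟨D, hD⟩ := (isCompact_Icc (a := s) (b := b)).exists_bound_of_continuousOn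
    (hg.continuous_deriv le_rfl).continuousOn
  have hD0 : 0 ≤ D := (norm_nonneg _).trans (hD s ⟨le_rfl, hsb.le⟩)
  set M : ℝ := |w₀| + Γ / c + 1 with hM
  have hM0 : 0 < M := by positivity
  have hcM : Γ < c * M := by
    have : c * M = c * |w₀| + Γ + c := by rw [hM]; field_simp
    have : 0 ≤ c * |w₀| := by positivity
    linarith
  set cl : ℝ → ℝ := fun x => max (-M) (min x M) with hcl
  have hcl1 : ∀ x, -M ≤ cl x := fun x => le_max_left _ _
  have hcl2 : ∀ x, cl x ≤ M := fun x => max_le (by linarith) (min_le_right _ _)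
  have hclid : ∀ x, -M ≤ x → x ≤ M → cl x = x := fun x h1 h2 => by
    simp only [hcl]; rw [min_eq_left h2, max_eq_right h1]
  set F : ℝ × ℝ → ℝ × ℝ := fun z => (cl z.2, gt z.1 - c * cl z.2) with hF
  obtain ⟨K, hK⟩ : ∃ K, LipschitzWith K F := by
    obtain ⟨K1, h1⟩ := clamp_lip (fun x => x) contDiff_id (-M) M (by linarith)
    obtain ⟨K2, h2⟩ := clamp_lip (fun x => c * x) (by fun_prop) (-M) M (by linarith)
    obtain ⟨K3, h3⟩ := clamp_lip g hg s b hsb.le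
    exact ⟨_, (h1.comp LipschitzWith.prod_snd).prodMk
      ((h3.comp LipschitzWith.prod_fst).sub (h2.comp LipschitzWith.prod_snd))⟩
  have hFb : ∀ z, ‖F z‖ ≤ M + (Γ + c * M) := by
    intro z
    have h1 := hcl1 z.2
    have h2 := hcl2 z.2
    have h3 := abs_le.mp (hgtb z.1)
    have h5 : c * cl z.2 ≤ c * M := by gcongr
    have h6 : c * (-M) ≤ c * cl z.2 := by gcongr
    rw [Prod.norm_def, max_le_iff, Real.norm_eq_abs, Real.norm_eq_abs, abs_le, abs_le]
    simp only [hF]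
    refine ⟨⟨?_, ?_⟩, ?_, ?_⟩ <;> linarith
  obtain ⟨α, hα0, hα⟩ := flow_exists F K hK _ hFb (v₀, w₀)
  set v : ℝ → ℝ := fun t => (α t).1 with hv
  set w : ℝ → ℝ := fun t => (α t).2 with hw
  have hv0 : v 0 = v₀ := by simp only [hv, hα0]
  have hw0 : w 0 = w₀ := by simp only [hw, hα0]
  have hvd0 : ∀ t, HasDerivAt v (cl (w t)) t := fun t => (hα t).fst
  have hwd0 : ∀ t, HasDerivAt w (gt (v t) - c * cl (w t)) t := fun t => (hα t).snd
  have hΓc : 0 ≤ Γ / c := by positivity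
  have hw1 : ∀ t ≥ 0, -M ≤ w t := barrier_ge w _ hwd0 (-M) 0
    (by rw [hw0]; linarith [neg_abs_le w₀]) (fun t h => by
      rw [h, hclid _ le_rfl (by linarith)]
      linarith [(abs_le.mp (hgtb (v t))).1])
  have hw2 : ∀ t ≥ 0, w t ≤ M := barrier_le w _ hwd0 M 0
    (by rw [hw0]; linarith [le_abs_self w₀]) (fun t h => by
      rw [h, hclid _ (by linarith) le_rfl]
      linarith [(abs_le.mp (hgtb (v t))).2])
  have hvd : ∀ t ≥ 0, HasDerivAt v (w t) t := fun t ht => by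
    have := hvd0 t
    rwa [hclid _ (hw1 t ht) (hw2 t ht)] at this
  have hwd1 : ∀ t ≥ 0, HasDerivAt w (gt (v t) - c * w t) t := fun t ht => by
    have := hwd0 t
    rwa [hclid _ (hw1 t ht) (hw2 t ht)] at this
  -- energy
  set G : ℝ → ℝ := fun x => ∫ y in b..x, gt y with hG
  have hGd : ∀ x, HasDerivAt G (gt x) x := fun x =>
    (hgtc.integral_hasStrictDerivAt b x).hasDerivAt
  have hGb : ∀ x, b ≤ x → G x = 0 := by
    intro x hx
    have : ∀ y ∈ Set.uIcc b x, gt y = (fun _ => (0:ℝ)) y := by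
      intro y hy
      rw [Set.uIcc_of_le hx] at hy
      simp only [hgt]
      rw [min_eq_right hy.1, max_eq_right hsb.le, hgb]
    simp only [hG]
    rw [intervalIntegral.integral_congr this]; simp
  have hGs : ∀ x, x ≤ s → G x ≤ 0 := by
    intro x hx
    have h1 : ∫ y in s..b, gt y = ∫ y in s..b, g y :=
      intervalIntegral.integral_congr (fun y hy => by
        rw [Set.uIcc_of_le hsb.le] at hy; exact hgtid y hy)
    have h2 : 0 ≤ ∫ y in x..s, gt y := by
      apply intervalIntegral.integral_nonneg hx
      intro y hy
      simp only [hgt]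
      rw [max_eq_left ((min_le_left _ _).trans hy.2)]
      exact (hpos s le_rfl hsa).le
    have h3 : G x = -(∫ y in x..b, gt y) := intervalIntegral.integral_symm _ _
    have h4 := intervalIntegral.integral_add_adjacent_intervals
      (hgtc.intervalIntegrable (μ := MeasureTheory.volume) x s) (hgtc.intervalIntegrable s b)
    rw [h3, ← h4, h1]; linarith
  have hGv₀ : G v₀ = ∫ x in b..v₀, g x :=
    intervalIntegral.integral_congr (fun y hy => by
      rw [Set.uIcc_of_ge hv₀.2] at hy
      exact hgtid y ⟨hv₀.1.trans hy.1, hy.2⟩)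
  set e₀ : ℝ := w₀ ^ 2 / 2 - ∫ x in b..v₀, g x with he₀
  have hEd : ∀ t ≥ 0, HasDerivAt (fun t => w t ^ 2 / 2 - G (v t)) (-c * w t ^ 2) t := by
    intro t ht
    have h1 := (((hwd1 t ht).fun_pow 2).div_const 2).fun_sub ((hGd (v t)).comp t (hvd t ht))
    refine h1.congr_deriv ?_
    push_cast; ring
  have hEanti : AntitoneOn (fun t => w t ^ 2 / 2 - G (v t)) (Set.Ici 0) := by
    apply antitoneOn_of_deriv_nonpos (convex_Ici 0)
    · exact fun t ht => (hEd t ht).continuousAt.continuousWithinAt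
    · intro t ht
      rw [interior_Ici] at ht
      exact (hEd t (le_of_lt ht)).differentiableAt.differentiableWithinAt
    · intro t ht
      rw [interior_Ici] at ht
      rw [(hEd t (le_of_lt ht)).deriv]
      nlinarith [sq_nonneg (w t)]
  have hEle : ∀ t ≥ 0, w t ^ 2 / 2 - G (v t) ≤ e₀ := by
    intro t ht
    have := hEanti (Set.mem_Ici.mpr le_rfl) (Set.mem_Ici.mpr ht) ht
    simp only [hv0, hw0, hGv₀] at this
    exact this
  have hGlow : ∀ t ≥ 0, -e₀ ≤ G (v t) := fun t ht => by
    have := hEle t ht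
    have := sq_nonneg (w t)
    linarith
  have hbox : ∀ t ≥ 0, v t ∈ Set.Icc s b := by
    intro t ht
    have h1 := hGlow t ht
    constructor
    · by_contra hh
      have := hGs (v t) (by linarith)
      linarith
    · by_contra hh
      have := hGb (v t) (by linarith)
      linarith
  have hwd : ∀ t ≥ 0, HasDerivAt w (g (v t) - c * w t) t := fun t ht => by
    have := hwd1 t ht
    rwa [hgtid _ (hbox t ht)] at this
  -- Lyapunov
  obtain ⟨ε, hε, hε'⟩ : ∃ ε > 0, ε * (c ^ 2 / 2 + D) ≤ c / 2 := by
    refine ⟨c / 2 / (c ^ 2 / 2 + D), by positivity, ?_⟩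
    rw [div_mul_cancel₀]; positivity
  have hgvd : ∀ t ≥ 0, HasDerivAt (fun t => g (v t)) (deriv g (v t) * w t) t := fun t ht =>
    (hgdiff (v t)).comp t (hvd t ht)
  obtain ⟨B0, hB0⟩ := (isCompact_Icc (a := s) (b := b)).exists_bound_of_continuousOn
    (f := G) (fun x _ => (hGd x).continuousAt.continuousWithinAt)
  have hga : ∀ t ≥ 0, |g (v t)| ≤ Γ := fun t ht => hΓ _ (hbox t ht)
  have hwa : ∀ t ≥ 0, |w t| ≤ M := fun t ht => abs_le.mpr ⟨hw1 t ht, hw2 t ht⟩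
  have hda : ∀ t ≥ 0, |deriv g (v t)| ≤ D := fun t ht => hD _ (hbox t ht)
  have hφ : Tendsto (fun t => c / 2 * w t ^ 2 + ε / 2 * g (v t) ^ 2) atTop (𝓝 0) := by
    refine barbalat (fun t => w t ^ 2 / 2 - G (v t) - ε * (w t * g (v t)))
      (fun t => -c * w t ^ 2 - ε * ((g (v t) - c * w t) * g (v t) + w t * (deriv g (v t) * w t)))
      _ (fun t => c / 2 * (2 * w t * (g (v t) - c * w t)) +
        ε / 2 * (2 * g (v t) * (deriv g (v t) * w t)))
      (c * (M * Γ) + ε * (Γ * (D * M)) + 1) (-B0 - ε * (M * Γ)) (by positivity) ?_ ?_ ?_ ?_ ?_ ?_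
    · intro t ht
      exact (hEd t ht).fun_sub (((hwd t ht).fun_mul (hgvd t ht)).const_mul ε)
    · intro t ht
      have h1 := (((hwd t ht).fun_pow 2).const_mul (c/2)).fun_add
        (((hgvd t ht).fun_pow 2).const_mul (ε/2))
      simpa using h1
    · intro t ht; positivity
    · intro t ht
      have h1 : w t * g (v t) ≤ M * Γ := (le_abs_self _).trans (by
        rw [abs_mul]; exact mul_le_mul (hwa t ht) (hga t ht) (abs_nonneg _) hM0.le)
      have h2 : g (v t) * (deriv g (v t) * w t) ≤ Γ * (D * M) := (le_abs_self _).trans (by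
        rw [abs_mul, abs_mul]
        exact mul_le_mul (hga t ht) (mul_le_mul (hda t ht) (hwa t ht) (abs_nonneg _) hD0)
          (by positivity) hΓ0)
      have h3 := mul_le_mul_of_nonneg_left h1 hc.le
      have h4 := mul_le_mul_of_nonneg_left h2 hε.le
      nlinarith [sq_nonneg (c * w t)]
    · intro t ht
      have h1 : -(deriv g (v t)) ≤ D := (neg_le_abs _).trans (hda t ht)
      have h2 := mul_le_mul_of_nonneg_left (mul_le_mul_of_nonneg_right h1 (sq_nonneg (w t))) hε.le
      have h3 := mul_le_mul_of_nonneg_right hε' (sq_nonneg (w t))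
      have h4 := mul_nonneg hε.le (sq_nonneg (g (v t) - c * w t))
      nlinarith
    · intro t ht
      have h1 : w t * g (v t) ≤ M * Γ := (le_abs_self _).trans (by
        rw [abs_mul]; exact mul_le_mul (hwa t ht) (hga t ht) (abs_nonneg _) hM0.le)
      have h2 := mul_le_mul_of_nonneg_left h1 hε.le
      have h3 : G (v t) ≤ B0 := (le_abs_self _).trans (hB0 _ (hbox t ht))
      have := sq_nonneg (w t)
      linarith
  have hsq : ∀ (f : ℝ → ℝ) (k : ℝ), 0 < k → (∀ t, k * f t ^ 2 ≤ c / 2 * w t ^ 2 + ε / 2 * g (v t) ^ 2) →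
      Tendsto f atTop (𝓝 0) := by
    intro f k hk h
    have h1 : Tendsto (fun t => k * f t ^ 2) atTop (𝓝 0) :=
      squeeze_zero (fun t => by positivity) h hφ
    have h2 : Tendsto (fun t => f t ^ 2) atTop (𝓝 0) := by
      have := h1.const_mul k⁻¹
      simpa [← mul_assoc, inv_mul_cancel₀ hk.ne'] using this
    rw [tendsto_zero_iff_abs_tendsto_zero]
    have h3 := h2.sqrt
    simpa [Real.sqrt_sq_eq_abs, Function.comp_def] using h3
  have hwlim : Tendsto w atTop (𝓝 0) := hsq w (c/2) (by linarith) (fun t => by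
    have : 0 ≤ ε / 2 * g (v t) ^ 2 := by positivity
    linarith)
  have hglim : Tendsto (fun t => g (v t)) atTop (𝓝 0) := hsq _ (ε/2) (by linarith) (fun t => by
    have : 0 ≤ c / 2 * w t ^ 2 := by positivity
    linarith)
  refine ⟨v, w, hv0, hw0, hvd, hwd, ?_, hwlim⟩
  rw [Metric.tendsto_atTop']
  intro r hr
  have hGcont : Continuous G := continuous_iff_continuousAt.mpr fun x => (hGd x).continuousAt
  set Kc : Set ℝ := (Set.Icc s b ∩ {x | -e₀ ≤ G x}) ∩ {x | r ≤ dist x a} with hKc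
  have hKcomp : IsCompact Kc := (isCompact_Icc.inter_right (isClosed_le continuous_const hGcont)).inter_right
    (isClosed_le continuous_const (by fun_prop))
  have hKg : ∀ x ∈ Kc, 0 < |g x| := by
    rintro x ⟨⟨hx, hxG⟩, hxr⟩
    have hxr' : r ≤ dist x a := hxr
    have hxG' : -e₀ ≤ G x := hxG
    rw [abs_pos]
    rcases lt_trichotomy x a with h | h | h
    · exact (hpos x hx.1 h).ne'
    · rw [h, dist_self] at hxr'; linarith
    · rcases hx.2.lt_or_eq with h' | h'
      · exact (hneg x h h').ne
      · have := hGb x h'.ge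
        linarith
  rcases Kc.eq_empty_or_nonempty with hemp | hne
  · refine ⟨0, fun t ht => ?_⟩
    by_contra hh
    have : v t ∈ Kc := ⟨⟨hbox t (le_of_lt ht), hGlow t (le_of_lt ht)⟩, not_lt.mp hh⟩
    rw [hemp] at this
    exact this
  · obtain ⟨x₀, hx₀, hmin⟩ := hKcomp.exists_isMinOn hne (f := fun x => |g x|) (by fun_prop)
    obtain ⟨N, hN⟩ := (Metric.tendsto_atTop'.mp hglim) _ (hKg x₀ hx₀)
    refine ⟨max N 0, fun t ht => ?_⟩
    have ht0 : 0 ≤ t := (le_max_right N 0).trans (le_of_lt ht)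
    have htN := hN t (lt_of_le_of_lt (le_max_left _ _) ht)
    by_contra hh
    have hmem : v t ∈ Kc := ⟨⟨hbox t ht0, hGlow t ht0⟩, not_lt.mp hh⟩
    have := hmin hmem
    simp only [Real.dist_eq, sub_zero] at htN
    exact absurd this (not_le.mpr htN)


theorem heteroclinic (g : ℝ → ℝ) (hg : ContDiff ℝ 1 g) (s a b c d : ℝ) (hc : 0 < c) (hd : 0 < d)
    (hsa : s < a) (hab : a < b) (hgb : g b = 0) (hgd : HasDerivAt g d b)
    (hneg : ∀ x, a < x → x < b → g x < 0) (hpos : ∀ x, s ≤ x → x < a → 0 < g x)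
    (hintg : 0 ≤ ∫ x in s..b, g x) :
    ∃ v w : ℝ → ℝ, (∀ t, HasDerivAt v (w t) t) ∧
      (∀ t, HasDerivAt w (g (v t) - c * w t) t) ∧
      Tendsto v atBot (𝓝 b) ∧ Tendsto w atBot (𝓝 0) ∧
      Tendsto v atTop (𝓝 a) ∧ Tendsto w atTop (𝓝 0) := by
  obtain ⟨v₁, w₁, hv₁, hw₁, hr, hvl, hwl⟩ := unstable_branch g hg b c d (b - a) hc hd
    (by linarith) hgb hgd
  set G : ℝ → ℝ := fun x => ∫ y in b..x, g y with hG
  have hGd : ∀ x, HasDerivAt G (g x) x := fun x =>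
    (hg.continuous.integral_hasStrictDerivAt b x).hasDerivAt
  have hEd : ∀ t ≤ 0, HasDerivAt (fun t => w₁ t ^ 2 / 2 - G (v₁ t)) (-c * w₁ t ^ 2) t := by
    intro t ht
    have h1 := (((hw₁ t ht).fun_pow 2).div_const 2).fun_sub ((hGd (v₁ t)).comp t (hv₁ t ht))
    refine h1.congr_deriv ?_
    push_cast; ring
  have hanti : StrictAntiOn (fun t => w₁ t ^ 2 / 2 - G (v₁ t)) (Set.Iic 0) := by
    apply strictAntiOn_of_deriv_neg (convex_Iic 0)
    · exact fun t ht => (hEd t ht).continuousAt.continuousWithinAt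
    · intro t ht
      rw [interior_Iic] at ht
      rw [(hEd t (le_of_lt ht)).deriv]
      have := (hr t (le_of_lt ht)).2.2
      have : 0 < w₁ t ^ 2 := sq_pos_of_neg this
      nlinarith
  have hElim : Tendsto (fun t => w₁ t ^ 2 / 2 - G (v₁ t)) atBot (𝓝 0) := by
    have h1 : Tendsto (fun t => G (v₁ t)) atBot (𝓝 (G b)) := (hGd b).continuousAt.tendsto.comp hvl
    have h2 : G b = 0 := by simp [hG]
    rw [h2] at h1
    simpa using ((hwl.pow 2).div_const 2).sub h1
  have h1 : w₁ 0 ^ 2 / 2 - G (v₁ 0) < w₁ (-1) ^ 2 / 2 - G (v₁ (-1)) :=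
    hanti (by simp) (by simp) (by norm_num)
  have h2 : w₁ (-1) ^ 2 / 2 - G (v₁ (-1)) ≤ 0 := by
    refine ge_of_tendsto hElim ?_
    filter_upwards [eventually_le_atBot (-1)] with t ht
    exact hanti.antitoneOn (Set.mem_Iic.mpr (by linarith)) (by simp) ht
  have hr0 := hr 0 le_rfl
  obtain ⟨v₂, w₂, hv0, hw0, hv₂, hw₂, hv₂l, hw₂l⟩ := stable_branch g hg s a b c (v₁ 0) (w₁ 0) hc hsa
    hab hgb hneg hpos hintg ⟨by linarith [hr0.1], hr0.2.1.le⟩ (h1.trans_le h2)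
  have glue : ∀ (x y : ℝ → ℝ) (F : ℝ → ℝ), x 0 = y 0 → (∀ t ≤ 0, HasDerivAt x (F t) t) →
      (∀ t ≥ 0, HasDerivAt y (F t) t) → ∀ t, HasDerivAt (fun t => if t ≤ 0 then x t else y t) (F t) t := by
    intro x y F h0 hx hy t
    rcases lt_trichotomy t 0 with h | h | h
    · refine (hx t h.le).congr_of_eventuallyEq ?_
      filter_upwards [eventually_lt_nhds h] with s hs
      simp [hs.le]
    · subst h
      have e1 : HasDerivWithinAt (fun t => if t ≤ 0 then x t else y t) (F 0) (Set.Iic 0) 0 :=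
        (hx 0 le_rfl).hasDerivWithinAt.congr (fun s hs => by simp [Set.mem_Iic.mp hs]) (by simp)
      have e2 : HasDerivWithinAt (fun t => if t ≤ 0 then x t else y t) (F 0) (Set.Ici 0) 0 :=
        (hy 0 le_rfl).hasDerivWithinAt.congr (fun s hs => by
          rcases (Set.mem_Ici.mp hs).eq_or_lt with h | h
          · simp [← h, h0]
          · simp [not_le.mpr h]) (by simp [h0])
      have := e1.union e2
      rwa [Set.Iic_union_Ici, hasDerivWithinAt_univ] at this
    · refine (hy t h.le).congr_of_eventuallyEq ?_
      filter_upwards [eventually_gt_nhds h] with s hs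
      simp [not_le.mpr hs]
  set v : ℝ → ℝ := fun t => if t ≤ 0 then v₁ t else v₂ t with hv
  set w : ℝ → ℝ := fun t => if t ≤ 0 then w₁ t else w₂ t with hw
  have hvn : ∀ t ≤ 0, v t = v₁ t := fun t ht => by simp [hv, ht]
  have hwn : ∀ t ≤ 0, w t = w₁ t := fun t ht => by simp [hw, ht]
  have hvp : ∀ t ≥ 0, v t = v₂ t := fun t ht => by
    rcases (show (0:ℝ) ≤ t from ht).eq_or_lt with h | h
    · rw [← h, hv0, hvn 0 le_rfl]
    · simp [hv, not_le.mpr h]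
  have hwp : ∀ t ≥ 0, w t = w₂ t := fun t ht => by
    rcases (show (0:ℝ) ≤ t from ht).eq_or_lt with h | h
    · rw [← h, hw0, hwn 0 le_rfl]
    · simp [hw, not_le.mpr h]
  refine ⟨v, w, ?_, ?_, ?_, ?_, ?_, ?_⟩
  · exact glue v₁ v₂ w hv0.symm (fun t ht => by rw [hwn t ht]; exact hv₁ t ht)
      (fun t ht => by rw [hwp t ht]; exact hv₂ t ht)
  · exact glue w₁ w₂ (fun t => g (v t) - c * w t) hw0.symm
      (fun t ht => by rw [hwn t ht, hvn t ht]; exact hw₁ t ht)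
      (fun t ht => by rw [hwp t ht, hvp t ht]; exact hw₂ t ht)
  · exact hvl.congr' (by filter_upwards [eventually_le_atBot 0] with t ht using (hvn t ht).symm)
  · exact hwl.congr' (by filter_upwards [eventually_le_atBot 0] with t ht using (hwn t ht).symm)
  · exact hv₂l.congr' (by filter_upwards [eventually_ge_atTop 0] with t ht using (hvp t ht).symm)
  · exact hw₂l.congr' (by filter_upwards [eventually_ge_atTop 0] with t ht using (hwp t ht).symm)

theorem profileF_symm (γ Pm Pp P : ℝ) : profileF γ Pm Pp P = profileF γ Pp Pm P := by
  unfold profileF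
  rw [← neg_sub (Pm ^ γ) (Pp ^ γ), ← neg_sub Pm Pp, ← neg_sub (Pm ^ (γ + 1)) (Pp ^ (γ + 1)),
    neg_div_neg_eq, neg_div_neg_eq, mul_comm Pm Pp]

theorem profile_core (γ k c L R : ℝ) (hγ : 1 ≤ γ) (hk : 0 < k) (hc : 0 < c) (hL : 0 < L)
    (hLR : L < R) :
    ∃ v w : ℝ → ℝ, (∀ t, HasDerivAt v (w t) t) ∧
      (∀ t, HasDerivAt w (2 / k ^ 2 * profileF γ L R (Real.exp (v t)) * (Real.exp (v t))⁻¹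
        - c * w t) t) ∧
      Tendsto v atBot (𝓝 (Real.log R)) ∧ Tendsto w atBot (𝓝 0) ∧
      Tendsto v atTop (𝓝 (Real.log L)) ∧ Tendsto w atTop (𝓝 0) := by
  have hR : 0 < R := hL.trans hLR
  have hRL : 0 < R - L := by linarith
  set κ : ℝ := 2 / k ^ 2 with hκ
  have hκ0 : 0 < κ := by positivity
  set B : ℝ := (R ^ (γ + 1) - L ^ (γ + 1)) / (R - L) with hB
  set A : ℝ := L * R * ((R ^ γ - L ^ γ) / (R - L)) with hA
  have hA0 : 0 < A := by
    have : L ^ γ < R ^ γ := Real.rpow_lt_rpow hL.le hLR (by linarith)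
    have : 0 < R ^ γ - L ^ γ := by linarith
    positivity
  set F : ℝ → ℝ := fun x => x ^ (γ + 1) - B * x + A with hF
  have hFf : ∀ x, 0 < x → profileF γ L R x = F x / x := by
    intro x hx
    simp only [hF, profileF, ← hB, hA]
    rw [Real.rpow_add_one hx.ne']
    field_simp
    ring
  have hBRL : B * (R - L) = R ^ (γ + 1) - L ^ (γ + 1) := by rw [hB]; field_simp
  have hARL : A * (R - L) = L * R * (R ^ γ - L ^ γ) := by rw [hA]; field_simp
  have hFL : F L = 0 := by
    have : F L * (R - L) = 0 := by
      simp only [hF]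
      have : (L ^ (γ + 1) - B * L + A) * (R - L) = L ^ (γ + 1) * (R - L) - L * (B * (R - L)) +
        A * (R - L) := by ring
      rw [this, hBRL, hARL, Real.rpow_add_one hL.ne', Real.rpow_add_one hR.ne']
      ring
    exact (mul_eq_zero.mp this).resolve_right hRL.ne'
  have hconv := strictConvexOn_rpow (show 1 < γ + 1 by linarith)
  have hFx : ∀ x, F x = x ^ (γ + 1) - L ^ (γ + 1) - B * (x - L) := by
    intro x
    have : F x = F x - F L := by rw [hFL, sub_zero]
    rw [this]; simp only [hF]; ring
  have hFR : F R = 0 := by rw [hFx, hBRL]; ring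
  have hFneg : ∀ x, L < x → x < R → F x < 0 := by
    intro x h1 h2
    have := hconv.secant_strict_mono_aux2 (Set.mem_Ici.mpr hL.le) (Set.mem_Ici.mpr hR.le) h1 h2
    rw [← hB, div_lt_iff₀ (by linarith)] at this
    rw [hFx]; linarith
  have hFpos : ∀ x, 0 < x → x < L → 0 < F x := by
    intro x h1 h2
    have := hconv.slope_strict_mono_adjacent (Set.mem_Ici.mpr h1.le) (Set.mem_Ici.mpr hR.le) h2 hLR
    rw [← hB, div_lt_iff₀ (by linarith)] at this
    rw [hFx]; linarith
  have hFd : 0 < (γ + 1) * R ^ γ - B := by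
    have h1 : HasDerivAt (fun x : ℝ => x ^ (γ + 1)) ((γ + 1) * R ^ (γ + 1 - 1)) R :=
      Real.hasDerivAt_rpow_const (Or.inl hR.ne')
    have := hconv.slope_lt_of_hasDerivAt (Set.mem_Ici.mpr hL.le) (Set.mem_Ici.mpr hR.le) hLR h1
    rw [slope_def_field, ← hB, add_sub_cancel_right] at this
    linarith
  set g : ℝ → ℝ := fun v => κ * (Real.exp (-2 * v) *
    (Real.exp ((γ + 1) * v) - B * Real.exp v + A)) with hg
  have hexpp : ∀ v, Real.exp v ^ (γ + 1) = Real.exp ((γ + 1) * v) := fun v => by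
    rw [← Real.exp_mul, mul_comm]
  have hgF : ∀ v, g v = κ * (Real.exp (-2 * v) * F (Real.exp v)) := fun v => by
    simp only [hg, hF, hexpp]
  have hgc : ContDiff ℝ 1 g := by fun_prop
  have hgf : ∀ v, g v = κ * profileF γ L R (Real.exp v) * (Real.exp v)⁻¹ := by
    intro v
    rw [hgF, hFf _ (Real.exp_pos v)]
    have : Real.exp (-2 * v) = (Real.exp v)⁻¹ * (Real.exp v)⁻¹ := by
      rw [← Real.exp_neg, ← Real.exp_add]; congr 1; ring
    rw [this]
    ring
  have hgR : g (Real.log R) = 0 := by rw [hgF, Real.exp_log hR, hFR]; ring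
  have hgd : HasDerivAt g (κ * (Real.exp (-2 * Real.log R) * (R * ((γ + 1) * R ^ γ - B))))
      (Real.log R) := by
    have e1 : HasDerivAt (fun v : ℝ => Real.exp (-2 * v))
        (Real.exp (-2 * Real.log R) * (-2 * 1)) (Real.log R) :=
      ((hasDerivAt_id (Real.log R)).const_mul (-2)).exp
    have e2 : HasDerivAt (fun v : ℝ => Real.exp ((γ + 1) * v))
        (Real.exp ((γ + 1) * Real.log R) * ((γ + 1) * 1)) (Real.log R) :=
      ((hasDerivAt_id (Real.log R)).const_mul (γ + 1)).exp
    have e3 := ((e2.fun_sub ((Real.hasDerivAt_exp (Real.log R)).const_mul B)).add_const A)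
    refine ((e1.fun_mul e3).const_mul κ).congr_deriv ?_
    have h4 : Real.exp ((γ + 1) * Real.log R) = R ^ (γ + 1) := by
      rw [← hexpp, Real.exp_log hR]
    have h5 : R ^ (γ + 1) - B * R + A = 0 := hFR
    rw [h4, Real.exp_log hR, h5, Real.rpow_add_one hR.ne']
    ring
  have hgneg : ∀ x, Real.log L < x → x < Real.log R → g x < 0 := by
    intro x h1 h2
    have := hFneg (Real.exp x) ((Real.log_lt_iff_lt_exp hL).mp h1) ((Real.lt_log_iff_exp_lt hR).mp h2)
    rw [hgF]
    have := mul_neg_of_pos_of_neg (Real.exp_pos (-2 * x)) this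
    exact mul_neg_of_pos_of_neg hκ0 this
  have hgpos : ∀ x, x < Real.log L → 0 < g x := by
    intro x h1
    have := hFpos (Real.exp x) (Real.exp_pos x) ((Real.lt_log_iff_exp_lt hL).mp h1)
    rw [hgF]
    exact mul_pos hκ0 (mul_pos (Real.exp_pos _) this)
  -- the left wall of the potential well
  obtain ⟨v₁, hv₁L, hv₁⟩ : ∃ v₁ < Real.log L, ∀ v ≤ v₁, 1 ≤ g v := by
    set X : ℝ := max 1 ((B + 1 / κ) / A) with hX
    have hX1 : 1 ≤ X := le_max_left _ _
    have hX2 : (B + 1 / κ) / A ≤ X := le_max_right _ _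
    refine ⟨min (-Real.log X) (Real.log L - 1), by
      have := min_le_right (-Real.log X) (Real.log L - 1); linarith, fun v hv => ?_⟩
    have hv' : v ≤ -Real.log X := hv.trans (min_le_left _ _)
    have hx : X ≤ Real.exp (-v) := by
      rw [← Real.log_le_iff_le_exp (by linarith)]; linarith
    have h3 : B + 1 / κ ≤ A * Real.exp (-v) := by
      have := (div_le_iff₀ hA0).mp (hX2.trans hx)
      linarith
    have h4 : Real.exp (-2 * v) = Real.exp (-v) * Real.exp (-v) := by
      rw [← Real.exp_add]; congr 1; ring
    have h5 : Real.exp (-v) * Real.exp v = 1 := by rw [← Real.exp_add]; simp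
    have h6 : 0 < Real.exp (-2 * v) * Real.exp ((γ + 1) * v) := by positivity
    have h7 : 1 / κ ≤ Real.exp (-v) * (A * Real.exp (-v) - B) := by
      have h8 : 0 < 1 / κ := by positivity
      have : 1 ≤ Real.exp (-v) := hX1.trans hx
      nlinarith
    have h9 : Real.exp (-2 * v) * (Real.exp ((γ + 1) * v) - B * Real.exp v + A) =
        Real.exp (-2 * v) * Real.exp ((γ + 1) * v) + Real.exp (-v) * (A * Real.exp (-v) - B) := by
      linear_combination (A - B * Real.exp v) * h4 - B * Real.exp (-v) * h5
    simp only [hg]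
    rw [h9]
    have h10 : κ * (1 / κ) = 1 := by field_simp
    calc (1:ℝ) = κ * (1 / κ) := h10.symm
      _ ≤ _ := by gcongr; linarith
  have hgcont : Continuous g := hgc.continuous
  set I : ℝ := ∫ x in v₁..Real.log R, g x with hI
  have hintg : 0 ≤ ∫ x in (v₁ - |I|)..Real.log R, g x := by
    rw [← intervalIntegral.integral_add_adjacent_intervals
      (hgcont.intervalIntegrable (μ := MeasureTheory.volume) (v₁ - |I|) v₁)
      (hgcont.intervalIntegrable v₁ (Real.log R)), ← hI]
    have h0 : v₁ - |I| ≤ v₁ := by linarith [abs_nonneg I]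
    have h1 : ∫ x in (v₁ - |I|)..v₁, (1:ℝ) ≤ ∫ x in (v₁ - |I|)..v₁, g x :=
      intervalIntegral.integral_mono_on h0 (by simp)
        (hgcont.intervalIntegrable _ _) (fun x hx => hv₁ x hx.2)
    simp at h1
    linarith [neg_abs_le I]
  obtain ⟨v, w, h1, h2, h3⟩ := heteroclinic g hgc (v₁ - |I|) (Real.log L) (Real.log R) c _ hc
    (by positivity) (by linarith [abs_nonneg I]) (Real.log_lt_log hL hLR) hgR hgd hgneg
    (fun x _ hx => hgpos x hx) hintg
  refine ⟨v, w, h1, fun t => ?_, h3⟩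
  rw [← hgf]
  exact h2 t

theorem stmt_4 (γ μ k Pm : ℝ) (hγ : 1 ≤ γ) (hμ : 0 < μ) (hk : 0 < k) (hPm : 0 < Pm) :
    ∃ ε > 0, ∀ s Pp Jp Jm : ℝ, 0 < Pp → |Pp - Pm| < ε →
      Jp - Jm = s * (Pp - Pm) →
      (Jp ^ 2 / Pp + Pp ^ γ) - (Jm ^ 2 / Pm + Pm ^ γ) = s * (Jp - Jm) →
      ((Jp / Pp + soundSpeed γ Pp < s ∧ s < Jm / Pm + soundSpeed γ Pm ∧
          soundSpeed γ Pp < Jp / Pp) ∨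
       (Jp / Pp - soundSpeed γ Pp < s ∧ s < Jm / Pm - soundSpeed γ Pm ∧
          |Jm / Pm| < soundSpeed γ Pm)) →
      ∃ P Q J : ℝ → ℝ,
        (∀ y : ℝ, 0 < P y) ∧
        (∀ y : ℝ, HasDerivAt P (Q y) y) ∧
        (∀ y : ℝ, HasDerivAt Q
          (2 / k ^ 2 * profileF γ Pm Pp (P y) - 2 * μ * s / k ^ 2 * Q y + (Q y) ^ 2 / P y) y) ∧
        Tendsto (fun y => (P y, Q y)) atBot (𝓝 (Pm, 0)) ∧
        Tendsto (fun y => (P y, Q y)) atTop (𝓝 (Pp, 0)) ∧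
        (∀ y : ℝ, J y = s * P y - (s * Pm - Jm)) := by
  refine ⟨1, one_pos, fun s Pp Jp Jm hPp _ hRH _ hLax => ?_⟩
  have hcs : ∀ ρ, 0 ≤ soundSpeed γ ρ := fun ρ => Real.sqrt_nonneg _
  have hmono : ∀ x y, 0 < x → x ≤ y → soundSpeed γ x * x ≤ soundSpeed γ y * y := by
    intro x y hx hxy
    apply mul_le_mul _ hxy hx.le (hcs y)
    apply Real.sqrt_le_sqrt
    have : x ^ (γ - 1) ≤ y ^ (γ - 1) := Real.rpow_le_rpow hx.le hxy (by linarith)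
    have : (0:ℝ) ≤ γ := by linarith
    gcongr
  have hJp : Jp / Pp * Pp = Jp := div_mul_cancel₀ _ hPp.ne'
  have hJm : Jm / Pm * Pm = Jm := div_mul_cancel₀ _ hPm.ne'
  have lim : ∀ (l : Filter ℝ) (v w : ℝ → ℝ) (P : ℝ), 0 < P → Tendsto v l (𝓝 (Real.log P)) →
      Tendsto w l (𝓝 0) →
      Tendsto (fun y => (Real.exp (v y), Real.exp (v y) * w y)) l (𝓝 (P, 0)) := by
    intro l v w P hP hv hw
    have h1 := (Real.continuous_exp.tendsto _).comp hv
    rw [Real.exp_log hP] at h1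
    have h2 := h1.mul hw
    rw [mul_zero] at h2
    exact h1.prodMk_nhds h2
  rcases hLax with ⟨h1, h2, h3⟩ | ⟨h1, h2, h3⟩
  · have hs : 0 < s := by linarith [hcs Pp]
    have hlt : Pp < Pm := by
      by_contra hh
      have hm := hmono Pm Pp hPm (not_lt.mp hh)
      have e1 := mul_lt_mul_of_pos_right h1 hPp
      have e2 := mul_lt_mul_of_pos_right h2 hPm
      rw [add_mul, hJp] at e1
      rw [add_mul, hJm] at e2
      linarith
    obtain ⟨v, w, hv, hw, l1, l2, l3, l4⟩ := profile_core γ k (2 * μ * s / k ^ 2) Pp Pm hγ hk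
      (by positivity) hPp hlt
    refine ⟨fun y => Real.exp (v y), fun y => Real.exp (v y) * w y,
      fun y => s * Real.exp (v y) - (s * Pm - Jm), fun y => Real.exp_pos _, fun y => (hv y).exp,
      fun y => ?_, lim _ _ _ _ hPm l1 l2, lim _ _ _ _ hPp l3 l4, fun y => rfl⟩
    refine ((hv y).exp.fun_mul (hw y)).congr_deriv ?_
    rw [profileF_symm γ Pp Pm]
    have := (Real.exp_pos (v y)).ne'
    field_simp
    ring
  · have hs : s < 0 := by linarith [(abs_lt.mp h3).2]
    have hlt : Pm < Pp := by
      by_contra hh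
      have hm := hmono Pp Pm hPp (not_lt.mp hh)
      have e1 := mul_lt_mul_of_pos_right h1 hPp
      have e2 := mul_lt_mul_of_pos_right h2 hPm
      rw [sub_mul, hJp] at e1
      rw [sub_mul, hJm] at e2
      linarith
    obtain ⟨v, w, hv, hw, l1, l2, l3, l4⟩ := profile_core γ k (2 * μ * (-s) / k ^ 2) Pm Pp hγ hk
      (by have : 0 < -s := by linarith
          positivity) hPm hlt
    have hv' : ∀ y, HasDerivAt (fun y => v (-y)) (-w (-y)) y := fun y => by
      have := (hv (-y)).comp y (hasDerivAt_neg y)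
      simpa [Function.comp_def] using this
    have hw' := fun y => ((hw (-y)).comp y (hasDerivAt_neg y)).fun_neg
    refine ⟨fun y => Real.exp (v (-y)), fun y => Real.exp (v (-y)) * (-w (-y)),
      fun y => s * Real.exp (v (-y)) - (s * Pm - Jm), fun y => Real.exp_pos _,
      fun y => (hv' y).exp, fun y => ?_,
      lim _ _ _ _ hPm (l3.comp tendsto_neg_atBot_atTop)
        (by simpa using (l4.comp tendsto_neg_atBot_atTop).neg),
      lim _ _ _ _ hPp (l1.comp tendsto_neg_atTop_atBot)
        (by simpa using (l2.comp tendsto_neg_atTop_atBot).neg), fun y => rfl⟩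
    refine ((hv' y).exp.fun_mul (hw' y)).congr_deriv ?_
    have := (Real.exp_pos (v (-y))).ne'
    simp only [Function.comp]
    field_simp
    ring
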